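/- Let W be the augmented mixing matrix of RelaySum. Then the algebraic multiplicity of the eigenvalue 1 of W (its multiplicity as a root of the characteristic polynomial of W) is 1. -/

import Mathlib

noncomputable section
open MeasureTheory Matrix

/-- The augmented RelaySum mixing matrix `W`. Index `(τ, i)` plays the role of `nτ+i`. -/
def relayW (n τm : ℕ) (τ : Fin n → Fin n → Fin (τm + 1)) :
    Matrix (Fin (τm + 1) × Fin n) (Fin (τm + 1) × Fin n) ℝ := fun p q =>
  if p.1 = 0 ∧ q.1 = τ p.2 q.2 then (n : ℝ)⁻¹
  else if p.2 = q.2 ∧ (p.1 : ℕ) = (q.1 : ℕ) + 1 then 1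
  else 0

/-!
A row-stochastic `M` never satisfies `M v = v + c • 1` with `c ≠ 0`: at a maximum of `v` the average
`M v` cannot exceed `v`, and at a minimum it cannot fall below it. So the all-ones vector is not in
the range of `M - 1`, and if the fixed vectors of `M` are the constants, no Jordan chain of the
eigenvalue `1` has length two and the eigenvalue is simple. A fixed vector of `W` is constant along
each worker's delay line, and the averaging rows make it the same for all workers.
-/

section GeneralizedEigenspace

theorem maxGenEigenspace_eq_eigenspace_of_disjoint {R V : Type*} [CommRing R] [AddCommGroup V]
    [Module R V] {f : Module.End R V} {μ : R}
    (h : Disjoint (f.eigenspace μ) (LinearMap.range (f - μ • 1))) :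
    f.maxGenEigenspace μ = f.eigenspace μ := by
  refine le_antisymm (fun x hx => ?_) Module.End.eigenspace_le_maxGenEigenspace
  rw [Module.End.mem_maxGenEigenspace] at hx
  obtain ⟨k, hk⟩ := hx
  rw [Module.End.eigenspace_def] at h ⊢
  induction k generalizing x with
  | zero =>
    have hx : x = 0 := hk
    exact hx ▸ zero_mem _
  | succ k ih =>
    rw [pow_succ, Module.End.mul_apply] at hk
    exact Submodule.disjoint_def.1 h _ (ih _ hk) ⟨x, rfl⟩

theorem rootMultiplicity_charpoly_eq_one_of_notMem_range {K V : Type*} [Field K]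
    [AddCommGroup V] [Module K V] [FiniteDimensional K V] {f : Module.End K V} {μ : K} {x : V}
    (hker : f.eigenspace μ = Submodule.span K {x})
    (hrange : x ∉ LinearMap.range (f - μ • 1)) :
    f.charpoly.rootMultiplicity μ = 1 := by
  have hdisj : Disjoint (f.eigenspace μ) (LinearMap.range (f - μ • 1)) :=
    hker ▸ (Submodule.disjoint_span_singleton_of_notMem hrange).symm
  have hx : x ≠ 0 := fun h => hrange (h ▸ zero_mem _)
  rw [← LinearMap.finrank_maxGenEigenspace_eq, maxGenEigenspace_eq_eigenspace_of_disjoint hdisj,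
    hker, finrank_span_singleton hx]

end GeneralizedEigenspace

section RowStochastic

variable {ι : Type*} [Fintype ι] [DecidableEq ι]

theorem mulVec_apply_le_of_mem_rowStochastic {R : Type*} [Semiring R] [PartialOrder R]
    [IsOrderedRing R] {M : Matrix ι ι R} (hM : M ∈ rowStochastic R ι) {v : ι → R} {a : R}
    (hv : ∀ j, v j ≤ a) (i : ι) : (M *ᵥ v) i ≤ a :=
  calc ∑ j, M i j * v j
      ≤ ∑ j, M i j * a :=
        Finset.sum_le_sum fun j _ =>
          mul_le_mul_of_nonneg_left (hv j) (nonneg_of_mem_rowStochastic hM)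
    _ = a := by rw [← Finset.sum_mul, sum_row_of_mem_rowStochastic hM, one_mul]

section LinearOrderedRing

variable {R : Type*} [Ring R] [LinearOrder R] [IsOrderedRing R] [Nonempty ι] {M : Matrix ι ι R}
  {v : ι → R} {c : R}

theorem nonpos_of_mulVec_eq_add_smul_one (hM : M ∈ rowStochastic R ι)
    (h : M *ᵥ v = v + c • 1) : c ≤ 0 := by
  obtain ⟨i, hi⟩ := Finite.exists_max v
  have hle : v i + c ≤ v i := by
    simpa [h] using mulVec_apply_le_of_mem_rowStochastic hM hi i
  exact nonpos_of_add_le_right hle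

theorem eq_zero_of_mulVec_eq_add_smul_one (hM : M ∈ rowStochastic R ι)
    (h : M *ᵥ v = v + c • 1) : c = 0 := by
  have hneg : M *ᵥ (-v) = -v + (-c) • 1 := by rw [mulVec_neg, h, neg_add, neg_smul]
  exact le_antisymm (nonpos_of_mulVec_eq_add_smul_one hM h)
    (neg_nonpos.1 (nonpos_of_mulVec_eq_add_smul_one hM hneg))

end LinearOrderedRing

theorem rootMultiplicity_one_charpoly_of_mem_rowStochastic {K : Type*} [Field K] [LinearOrder K]
    [IsOrderedRing K] [Nonempty ι] {M : Matrix ι ι K} (hM : M ∈ rowStochastic K ι)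
    (hfixed : ∀ v, M *ᵥ v = v → v ∈ Submodule.span K {(1 : ι → K)}) :
    M.charpoly.rootMultiplicity 1 = 1 := by
  rw [← charpoly_toLin']
  apply rootMultiplicity_charpoly_eq_one_of_notMem_range (x := (1 : ι → K))
  · apply le_antisymm
    · intro v hv
      rw [Module.End.mem_eigenspace_iff, toLin'_apply, one_smul] at hv
      exact hfixed v hv
    · rw [Submodule.span_singleton_le_iff_mem, Module.End.mem_eigenspace_iff, toLin'_apply,
        one_smul]
      exact one_vecMul_of_mem_rowStochastic hM
  · rintro ⟨v, hv⟩
    have h : M *ᵥ v = v + (1 : K) • 1 := by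
      rw [one_smul]
      simpa [sub_eq_iff_eq_add'] using hv
    exact one_ne_zero (eq_zero_of_mulVec_eq_add_smul_one hM h)

end RowStochastic

section RelayMatrix

variable {n τm : ℕ} (τ : Fin n → Fin n → Fin (τm + 1))

theorem relayW_nonneg (p q : Fin (τm + 1) × Fin n) : 0 ≤ relayW n τm τ p q := by
  unfold relayW
  split_ifs <;> positivity

theorem relayW_mulVec_zero (v : Fin (τm + 1) × Fin n → ℝ) (i : Fin n) :
    (relayW n τm τ *ᵥ v) (0, i) = (n : ℝ)⁻¹ * ∑ j, v (τ i j, j) := by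
  have hrow (s : Fin (τm + 1)) (j : Fin n) :
      relayW n τm τ (0, i) (s, j) = if s = τ i j then (n : ℝ)⁻¹ else 0 := by
    simp [relayW]
  simp only [mulVec, dotProduct, Fintype.sum_prod_type_right, hrow, ite_mul, zero_mul,
    Finset.sum_ite_eq', Finset.mem_univ, if_true, Finset.mul_sum]

theorem relayW_mulVec_succ (v : Fin (τm + 1) × Fin n → ℝ) (t : Fin τm) (i : Fin n) :
    (relayW n τm τ *ᵥ v) (t.succ, i) = v (t.castSucc, i) := by
  have hrow (q : Fin (τm + 1) × Fin n) :
      relayW n τm τ (t.succ, i) q = if q = (t.castSucc, i) then 1 else 0 := by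
    simp only [relayW, Fin.val_succ, Prod.ext_iff, Fin.ext_iff, Fin.val_castSucc]
    grind
  simp only [mulVec, dotProduct, hrow, ite_mul, one_mul, zero_mul, Finset.sum_ite_eq',
    Finset.mem_univ, if_true]

theorem relayW_mem_rowStochastic : relayW n τm τ ∈ rowStochastic ℝ (Fin (τm + 1) × Fin n) := by
  refine mem_rowStochastic.2 ⟨relayW_nonneg τ, ?_⟩
  ext ⟨t, i⟩
  cases t using Fin.cases with
  | zero =>
    have hn : (n : ℝ) ≠ 0 := Nat.cast_ne_zero.2 i.pos.ne'
    simp [relayW_mulVec_zero, hn]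
  | succ t => simp only [relayW_mulVec_succ, Pi.one_apply]

variable {τ} in
theorem mem_span_one_of_relayW_mulVec_eq_self {v : Fin (τm + 1) × Fin n → ℝ}
    (hv : relayW n τm τ *ᵥ v = v) : v ∈ Submodule.span ℝ {1} := by
  have hdelay (t : Fin (τm + 1)) (i : Fin n) : v (t, i) = v (0, i) := by
    induction t using Fin.induction with
    | zero => rfl
    | succ t ih => rw [← ih, ← relayW_mulVec_succ τ v t i, hv]
  have hmean (i : Fin n) : v (0, i) = (n : ℝ)⁻¹ * ∑ j, v (0, j) :=
    calc v (0, i) = (relayW n τm τ *ᵥ v) (0, i) := by rw [hv]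
      _ = (n : ℝ)⁻¹ * ∑ j, v (0, j) := by simp only [relayW_mulVec_zero, hdelay (τ i _)]
  refine Submodule.mem_span_singleton.2 ⟨(n : ℝ)⁻¹ * ∑ j, v (0, j), ?_⟩
  ext ⟨t, i⟩
  rw [hdelay, hmean, Pi.smul_apply, Pi.one_apply, smul_eq_mul, mul_one]

end RelayMatrix

theorem relayW_algebraic_multiplicity_one_general {n : ℕ} (hn : 1 ≤ n) {τm : ℕ}
    (τ : Fin n → Fin n → Fin (τm + 1)) :
    (relayW n τm τ).charpoly.rootMultiplicity 1 = 1 := by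
  have : Nonempty (Fin n) := ⟨⟨0, hn⟩⟩
  exact rootMultiplicity_one_charpoly_of_mem_rowStochastic (relayW_mem_rowStochastic τ)
    fun _ => mem_span_one_of_relayW_mulVec_eq_self

/-- the algebraic multiplicity of the eigenvalue `1` of `W`, i.e. its multiplicity
as a root of the characteristic polynomial of `W`, is one. -/
theorem relayW_algebraic_multiplicity_one
    (n τm : ℕ) (hn : 1 ≤ n)
    (τ : Fin n → Fin n → Fin (τm + 1))
    (hτdiag : ∀ i, τ i i = 0) (hτsymm : ∀ i j, τ i j = τ j i) :
    Polynomial.rootMultiplicity (1 : ℝ) (Matrix.charpoly (relayW n τm τ)) = 1 :=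
  relayW_algebraic_multiplicity_one_general hn τ
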